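/- With high probability, B_{⌊Cn⌋} has at most (k/2 + 2^{−k} + δ/2)·n edges, and the number of vertices of degree at most k−1 in B_{⌊Cn⌋} is at most εn. -/

import Mathlib

open Finset Filter

namespace RGP

/-- Number of edges of the complete graph on `n` vertices. -/
def numEdges (n : ℕ) : ℕ := n * (n - 1) / 2

/-- An edge of the complete graph on `Fin n` (an unordered pair of distinct vertices). -/
abbrev EdgeType (n : ℕ) := {e : Sym2 (Fin n) // ¬ e.IsDiag}

/-- A uniformly random permutation of the edges of `K_n` is modelled by a bijection
`σ` between positions `Fin (numEdges n)` and edges; `σ i` is the edge `e_{i+1}`. -/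
abbrev Ord (n : ℕ) := Fin (numEdges n) ≃ EdgeType n

/-- Degree of a vertex `v` in a set `S` of edges. -/
def deg {n : ℕ} (S : Finset (Sym2 (Fin n))) (v : Fin n) : ℕ :=
  (S.filter (fun e => v ∈ e)).card

/-- The edge set `{e_1, …, e_m}` of `G_{n,m}` in the random graph process `σ`. -/
def procEdges {n : ℕ} (σ : Ord n) (m : ℕ) : Finset (Sym2 (Fin n)) :=
  (Finset.univ.filter (fun i : Fin (numEdges n) => (i : ℕ) < m)).image (fun i => (σ i).1)

/-- The hitting time `τ_k` for minimum degree at least `k`. -/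
noncomputable def tau {n : ℕ} (k : ℕ) (σ : Ord n) : ℕ :=
  sInf {m | ∀ v : Fin n, k ≤ deg (procEdges σ m) v}

open scoped Classical in
/-- The probability of an event under the uniformly random edge ordering. -/
noncomputable def Pr {n : ℕ} (p : Ord n → Prop) : ℝ :=
  ((Finset.univ : Finset (Ord n)).filter p).card / (Fintype.card (Ord n) : ℝ)

/-- A deterministic online strategy: given the sequence of edges revealed so far
(the last entry being the edge just revealed), decide whether to purchase it. -/
abbrev Strategy (n : ℕ) := List (Sym2 (Fin n)) → Bool

/-- The list of the first `i` revealed edges `e_1, …, e_i`. -/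
def prefixList {n : ℕ} (σ : Ord n) (i : ℕ) : List (Sym2 (Fin n)) :=
  (List.range i).filterMap (fun j => if h : j < numEdges n then some (σ ⟨j, h⟩).1 else none)

/-- `buy st σ i` is the edge set of Builder's graph `B_i`: the edges purchased by the
strategy `st` among `e_1, …, e_i`. -/
def buy {n : ℕ} (st : Strategy n) (σ : Ord n) : ℕ → Finset (Sym2 (Fin n))
  | 0 => ∅
  | i + 1 =>
    if h : i < numEdges n then
      if st (prefixList σ (i + 1)) then insert (σ ⟨i, h⟩).1 (buy st σ i)
      else buy st σ i
    else buy st σ i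

end RGP

namespace RGP

open scoped Classical in
/-- Builder's graph from the first loop of Algorithm 1: `e_i` is purchased if and only if
both of its endpoints have degree less than `k` in `B_{i−1}`, or at least one endpoint
has degree `0` in `G_{n,i−1}`. -/
noncomputable def algB {n : ℕ} (k : ℕ) (σ : Ord n) : ℕ → Finset (Sym2 (Fin n))
  | 0 => ∅
  | i + 1 =>
    if h : i < numEdges n then
      if (∀ v ∈ ((σ ⟨i, h⟩ : EdgeType n) : Sym2 (Fin n)), deg (algB k σ i) v < k) ∨
          (∃ v ∈ ((σ ⟨i, h⟩ : EdgeType n) : Sym2 (Fin n)), deg (procEdges σ i) v = 0) then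
        insert ((σ ⟨i, h⟩ : EdgeType n) : Sym2 (Fin n)) (algB k σ i)
      else algB k σ i
    else algB k σ i

end RGP

/-!
Call an edge of the process *excess* if it joins an isolated vertex to a vertex of degree at least
`k`. Every other edge bought by Builder joins two vertices whose degrees in Builder's graph are less
than `k`, so it raises the degree sum capped at `k` by two; an excess edge still raises it by one.
Hence twice the number of bought edges is at most `k * n` plus the number of excess edges.

The mean number of excess edges is at most `2 ^ (-k) * n`. Indeed, exchanging the labels of the
edges `uw` and `vw` shows that `v` gains its next edge before `u` gains its first one with
probability at most `1/2`, so `v` reaches degree `k` while `u` is isolated with probability at most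
`2 ^ (-k)`; and by symmetry the first edge at `u` then goes to `v` with probability at most
`1 / (n - 1)`. Exchanging two entries of the ordering changes the number of excess edges by a
bounded amount, so its variance is linear in `n` and Chebyshev's inequality applies.

While more than `ε * n` vertices have degree less than `k` in Builder's graph, the next edge joins
two of them with probability at least about `ε ^ 2`, and Builder buys it. The capped degree sum is
at most `k * n`, so by an exponential moment estimate this situation does not survive
`k * ε⁻¹ ^ 2 * n` steps.
-/

namespace RGP

open scoped BigOperators

/-! ### Averages over random bijections -/

lemma expect_sub_sq {ι : Type*} {s : Finset ι} (hs : s.Nonempty) (x : ι → ℝ) (a : ℝ) :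
    𝔼 i ∈ s, (x i - a) ^ 2 = 𝔼 i ∈ s, (x i - 𝔼 j ∈ s, x j) ^ 2 + (𝔼 i ∈ s, x i - a) ^ 2 := by
  have expand (b : ℝ) :
      𝔼 i ∈ s, (x i - b) ^ 2 = 𝔼 i ∈ s, x i ^ 2 - 2 * b * 𝔼 i ∈ s, x i + b ^ 2 := by
    rw [mul_expect, ← expect_const hs (b ^ 2), ← expect_sub_distrib, ← expect_add_distrib]
    exact expect_congr rfl fun i _ => by ring
  rw [expand, expand]
  ring

section RandomBijection

variable {ι β : Type*} [DecidableEq ι]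

/-- The ordering obtained from `σ` by exchanging the entries at the positions `a` and `b`. -/
def swapPos (a b : ι) (σ : ι ≃ β) : ι ≃ β := (Equiv.swap a b).trans σ

lemma swapPos_apply_left (a b : ι) (σ : ι ≃ β) : swapPos a b σ a = σ b := by simp [swapPos]

lemma swapPos_apply_right (a b : ι) (σ : ι ≃ β) : swapPos a b σ b = σ a := by simp [swapPos]

lemma swapPos_apply_of_ne_of_ne {a b x : ι} (σ : ι ≃ β) (ha : x ≠ a) (hb : x ≠ b) :
    swapPos a b σ x = σ x := by
  simp [swapPos, Equiv.swap_apply_of_ne_of_ne ha hb]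

lemma swapPos_swapPos (a b : ι) (σ : ι ≃ β) : swapPos a b (swapPos a b σ) = σ := by
  ext x
  simp [swapPos]

lemma swapPos_swapPos_comm (m j a b : ι) (σ : ι ≃ β) :
    swapPos m j (swapPos a b σ) =
      swapPos (Equiv.swap m j a) (Equiv.swap m j b) (swapPos m j σ) := by
  ext x
  simp [swapPos, Equiv.swap_apply_apply]

lemma swapPos_eqOn {s : Set ι} {a b : ι} (σ : ι ≃ β) (ha : a ∉ s) (hb : b ∉ s) :
    Set.EqOn (swapPos a b σ) σ s := fun _ hx =>
  swapPos_apply_of_ne_of_ne σ (ne_of_mem_of_not_mem hx ha) (ne_of_mem_of_not_mem hx hb)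

lemma abs_expect_swapPos_sub_le {f : (ι ≃ β) → ℝ} {c : ℝ}
    (hf : ∀ a b σ, |f (swapPos a b σ) - f σ| ≤ c) (m : ι) {s : Finset ι} (hs : s.Nonempty)
    (a b : ι) (σ : ι ≃ β) :
    |𝔼 j ∈ s, f (swapPos m j (swapPos a b σ)) - 𝔼 j ∈ s, f (swapPos m j σ)| ≤ c := by
  rw [← expect_sub_distrib]
  refine (abs_expect_le _ _).trans (expect_le hs fun j _ => ?_)
  rw [swapPos_swapPos_comm]
  exact hf _ _ _

variable [Fintype ι]

lemma expect_swapPos_congr {f : (ι ≃ β) → ℝ} {m : ι} {s : Finset ι}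
    (hf : ∀ σ τ : ι ≃ β, Set.EqOn σ τ (insert m s : Finset ι) → f σ = f τ)
    {σ τ : ι ≃ β} (hm : m ∉ s) (h : Set.EqOn σ τ s) :
    𝔼 j ∈ sᶜ, f (swapPos m j σ) = 𝔼 j ∈ sᶜ, f (swapPos m j τ) := by
  have symm_mem {σ τ : ι ≃ β} (h : Set.EqOn σ τ s) {j : ι} (hj : j ∈ sᶜ) :
      τ.symm (σ j) ∈ sᶜ := by
    rw [mem_compl] at hj ⊢
    intro hmem
    have : σ (τ.symm (σ j)) = σ j := by rw [h hmem, Equiv.apply_symm_apply]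
    exact hj (σ.injective this ▸ hmem)
  refine expect_nbij' (fun j => τ.symm (σ j)) (fun j => σ.symm (τ j))
    (fun _ => symm_mem h) (fun _ => symm_mem h.symm) (by simp) (by simp) fun j hj => ?_
  apply hf
  intro i hi
  rcases mem_insert.mp hi with rfl | hi
  · simp only [swapPos_apply_left, Equiv.apply_symm_apply]
  · have hms : m ∉ (s : Set ι) := by simpa using hm
    rw [swapPos_eqOn σ hms (by simpa using hj) hi,
      swapPos_eqOn τ hms (by simpa using symm_mem h hj) hi, h hi]

variable [Fintype β] [DecidableEq β]

lemma expect_expect_swapPos (F : (ι ≃ β) → ℝ) (i : ι) {s : Finset ι} (hs : s.Nonempty) :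
    𝔼 σ, 𝔼 j ∈ s, F (swapPos i j σ) = 𝔼 σ, F σ := by
  rw [expect_comm]
  have invariant (j : ι) : 𝔼 σ, F (swapPos i j σ) = 𝔼 σ, F σ :=
    Fintype.expect_bijective _ (Function.Involutive.bijective (swapPos_swapPos i j)) _ _
      fun _ => rfl
  simp only [invariant, expect_const hs]

/- Efron–Stein by revealing the positions of `s` one at a time: averaging `f` over the entry at
`m ∈ s` preserves the mean and the Lipschitz constant, removes the dependence on `m`, and lowers
the variance by at most `c ^ 2`. -/
theorem expect_sub_expect_sq_le {s : Finset ι} {f : (ι ≃ β) → ℝ} {c : ℝ}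
    (hf : ∀ σ τ : ι ≃ β, Set.EqOn σ τ s → f σ = f τ)
    (hc : ∀ a b σ, |f (swapPos a b σ) - f σ| ≤ c) :
    𝔼 σ, (f σ - 𝔼 τ, f τ) ^ 2 ≤ #s * c ^ 2 := by
  induction s using Finset.induction_on generalizing f with
  | empty =>
    have deviation_eq_zero (σ : ι ≃ β) : f σ - 𝔼 τ, f τ = 0 := by
      have : Nonempty (ι ≃ β) := ⟨σ⟩
      rw [expect_congr rfl fun τ _ => hf τ σ (by simp), Fintype.expect_const, sub_self]
    simp [deviation_eq_zero]
  | insert m s hm ih =>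
    set g : (ι ≃ β) → ℝ := fun σ => 𝔼 j ∈ sᶜ, f (swapPos m j σ)
    have hs : sᶜ.Nonempty := ⟨m, mem_compl.mpr hm⟩
    have expect_g : 𝔼 σ, g σ = 𝔼 σ, f σ := expect_expect_swapPos f m hs
    have variance_g : 𝔼 σ, (g σ - 𝔼 τ, f τ) ^ 2 ≤ #s * c ^ 2 :=
      expect_g ▸ ih (fun σ τ h => expect_swapPos_congr hf hm h)
        (abs_expect_swapPos_sub_le hc m hs)
    have average_le (σ : ι ≃ β) :
        𝔼 j ∈ sᶜ, (f (swapPos m j σ) - 𝔼 τ, f τ) ^ 2 ≤ (g σ - 𝔼 τ, f τ) ^ 2 + c ^ 2 := by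
      have spread_le : 𝔼 j ∈ sᶜ, (f (swapPos m j σ) - f σ) ^ 2 ≤ c ^ 2 :=
        expect_le hs fun j _ => sq_le_sq.mpr ((hc m j σ).trans (le_abs_self c))
      rw [expect_sub_sq hs] at spread_le ⊢
      linarith [sq_nonneg (g σ - f σ)]
    have c_sq_nonneg := sq_nonneg c
    calc 𝔼 σ, (f σ - 𝔼 τ, f τ) ^ 2
        = 𝔼 σ, 𝔼 j ∈ sᶜ, (f (swapPos m j σ) - 𝔼 τ, f τ) ^ 2 :=
          (expect_expect_swapPos (fun σ => (f σ - 𝔼 τ, f τ) ^ 2) m hs).symm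
      _ ≤ 𝔼 σ, ((g σ - 𝔼 τ, f τ) ^ 2 + c ^ 2) := expect_le_expect fun σ _ => average_le σ
      _ ≤ #s * c ^ 2 + c ^ 2 := by
          rw [expect_add_distrib]
          gcongr
          cases isEmpty_or_nonempty (ι ≃ β) <;> simp [c_sq_nonneg]
      _ = #(insert m s) * c ^ 2 := by
          rw [card_insert_of_notMem hm]
          push_cast
          ring

end RandomBijection

/-! ### Probability of events under a uniformly random ordering -/

section Probability

variable {n : ℕ} {p q r : Ord n → Prop}

lemma card_edgeType (n : ℕ) : Fintype.card (EdgeType n) = numEdges n := by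
  rw [numEdges, ← Nat.choose_two_right, Sym2.card_subtype_not_diag, Fintype.card_fin]

instance : Nonempty (Ord n) :=
  ⟨(Fintype.equivFinOfCardEq (card_edgeType n)).symm⟩

open scoped Classical in
lemma Pr_eq_expect (p : Ord n → Prop) : Pr p = 𝔼 σ, if p σ then 1 else 0 := by
  rw [Fintype.expect_eq_sum_div_card, sum_boole, Pr]

lemma Pr_mono (h : ∀ σ, p σ → q σ) : Pr p ≤ Pr q := by
  classical
  simp only [Pr_eq_expect]
  exact expect_le_expect fun σ _ => by
    by_cases hp : p σ
    · simp [hp, h σ hp]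
    · rw [if_neg hp]
      positivity

lemma Pr_nonneg (p : Ord n → Prop) : 0 ≤ Pr p := by
  unfold Pr
  positivity

lemma Pr_true : Pr (fun _ : Ord n => True) = 1 := by simp [Pr_eq_expect]

lemma Pr_le_one (p : Ord n → Prop) : Pr p ≤ 1 :=
  Pr_true (n := n) ▸ Pr_mono fun _ _ => trivial

lemma Pr_or_le (p q : Ord n → Prop) : Pr (fun σ => p σ ∨ q σ) ≤ Pr p + Pr q := by
  simp only [Pr_eq_expect, ← expect_add_distrib]
  exact expect_le_expect fun σ _ => by
    by_cases hp : p σ <;> by_cases hq : q σ <;> simp [hp, hq]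

lemma one_le_Pr_add_Pr_add_Pr (h : ∀ σ, p σ ∨ q σ ∨ r σ) : 1 ≤ Pr p + Pr q + Pr r :=
  calc 1 = Pr (fun _ : Ord n => True) := Pr_true.symm
    _ ≤ Pr (fun σ => p σ ∨ q σ ∨ r σ) := Pr_mono fun σ _ => h σ
    _ ≤ Pr p + (Pr q + Pr r) :=
        (Pr_or_le p fun σ => q σ ∨ r σ).trans (by gcongr; exact Pr_or_le q r)
    _ = Pr p + Pr q + Pr r := by ring

lemma Pr_le_sum {ι : Type*} {s : Finset ι} {P : ι → Ord n → Prop}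
    (h : ∀ σ, q σ → ∃ w ∈ s, P w σ) : Pr q ≤ ∑ w ∈ s, Pr (P w) := by
  classical
  simp only [Pr_eq_expect, ← expect_sum_comm]
  refine expect_le_expect fun σ _ => ?_
  split_ifs with hq
  · obtain ⟨w, hw, hP⟩ := h σ hq
    calc (1 : ℝ) = if P w σ then 1 else 0 := by rw [if_pos hP]
      _ ≤ _ := single_le_sum (f := fun w => if P w σ then (1 : ℝ) else 0)
          (fun _ _ => by positivity) hw
  · positivity

lemma sum_Pr_le {ι : Type*} {s : Finset ι} {P : ι → Ord n → Prop}
    (hq : ∀ w ∈ s, ∀ σ, P w σ → q σ) (hP : ∀ v w σ, P v σ → P w σ → v = w) :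
    ∑ w ∈ s, Pr (P w) ≤ Pr q := by
  classical
  simp only [Pr_eq_expect, ← expect_sum_comm]
  refine expect_le_expect fun σ _ => ?_
  split_ifs with h
  · rw [sum_boole]
    exact_mod_cast card_le_one.mpr fun v hv w hw =>
      hP v w σ (mem_filter.mp hv).2 (mem_filter.mp hw).2
  · exact (sum_eq_zero fun w hw => if_neg fun hPw => h (hq w hw σ hPw)).le

lemma Pr_and_not (h : ∀ σ, q σ → p σ) : Pr (fun σ => p σ ∧ ¬ q σ) = Pr p - Pr q := by
  simp only [Pr_eq_expect, ← expect_sub_distrib]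
  refine expect_congr rfl fun σ _ => ?_
  by_cases hq : q σ
  · simp [hq, h σ hq]
  · by_cases hp : p σ <;> simp [hp, hq]

lemma mul_Pr_le_expect {f : Ord n → ℝ} (hf : ∀ σ, 0 ≤ f σ) {a : ℝ} (h : ∀ σ, p σ → a ≤ f σ) :
    a * Pr p ≤ 𝔼 σ, f σ := by
  rw [Pr_eq_expect, mul_expect]
  exact expect_le_expect fun σ _ => by
    split_ifs with hp
    · simpa using h σ hp
    · simpa using hf σ

lemma Pr_le_of_trans_swap (e e' : EdgeType n) (h : ∀ σ, p σ → q (σ.trans (Equiv.swap e e'))) :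
    Pr p ≤ Pr q := by
  have invariant : Pr (fun σ : Ord n => q (σ.trans (Equiv.swap e e'))) = Pr q := by
    simp only [Pr_eq_expect]
    refine Fintype.expect_bijective (fun σ : Ord n => σ.trans (Equiv.swap e e'))
      (Function.Involutive.bijective fun σ => ?_) _ _ fun _ => rfl
    ext
    simp
  exact invariant ▸ Pr_mono h

end Probability

/-! ### Degrees in the random graph process and in Builder's graph -/

section Degrees

variable {n : ℕ} {S T : Finset (Sym2 (Fin n))} {e : Sym2 (Fin n)} {v : Fin n} {σ τ : Ord n}
  {k m : ℕ}

lemma deg_mono (h : S ⊆ T) (v : Fin n) : deg S v ≤ deg T v :=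
  card_le_card (filter_subset_filter _ h)

lemma deg_eq_zero : deg S v = 0 ↔ ∀ e ∈ S, v ∉ e := by
  simp [deg, filter_eq_empty_iff]

lemma deg_insert (he : e ∉ S) (v : Fin n) :
    deg (insert e S) v = deg S v + if v ∈ e then 1 else 0 := by
  rw [deg, filter_insert]
  split_ifs
  · rw [card_insert_of_notMem (fun h => he (mem_of_mem_filter e h)), deg]
  · rfl

lemma deg_insert_le (S : Finset (Sym2 (Fin n))) (e : Sym2 (Fin n)) (v : Fin n) :
    deg (insert e S) v ≤ deg S v + if v ∈ e then 1 else 0 := by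
  by_cases he : e ∈ S
  · rw [insert_eq_of_mem he]
    exact Nat.le_add_right _ _
  · exact (deg_insert he v).le

lemma mem_procEdges : e ∈ procEdges σ m ↔ ∃ i : Fin (numEdges n), (i : ℕ) < m ∧ (σ i).1 = e := by
  simp [procEdges]

lemma procEdges_mono (σ : Ord n) : Monotone (procEdges σ) := by
  intro a b hab e
  simp only [mem_procEdges]
  rintro ⟨i, hi, rfl⟩
  exact ⟨i, hi.trans_le hab, rfl⟩

lemma procEdges_congr (h : Set.EqOn σ τ {i | (i : ℕ) < m}) : procEdges σ m = procEdges τ m := by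
  ext e
  simp only [mem_procEdges]
  exact exists_congr fun i => and_congr_right fun hi => by rw [h hi]

lemma procEdges_succ (σ : Ord n) (i : Fin (numEdges n)) :
    procEdges σ (i + 1) = insert (σ i).1 (procEdges σ i) := by
  ext e
  simp only [mem_procEdges, mem_insert, Nat.lt_succ_iff_lt_or_eq, or_and_right, exists_or,
    Fin.val_inj, exists_eq_left, eq_comm (a := e)]
  exact or_comm

lemma notMem_procEdges (σ : Ord n) (i : Fin (numEdges n)) : (σ i).1 ∉ procEdges σ i := by
  rw [mem_procEdges]
  rintro ⟨j, hj, h⟩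
  rw [σ.injective (Subtype.ext h)] at hj
  exact hj.false

lemma deg_procEdges_succ (σ : Ord n) (i : Fin (numEdges n)) (v : Fin n) :
    deg (procEdges σ (i + 1)) v = deg (procEdges σ i) v + if v ∈ (σ i).1 then 1 else 0 := by
  rw [procEdges_succ, deg_insert (notMem_procEdges σ i)]

lemma notMem_of_deg_procEdges_eq_zero (h : deg (procEdges σ m) v = 0) {i : Fin (numEdges n)}
    (hi : (i : ℕ) < m) : v ∉ (σ i).1 :=
  deg_eq_zero.mp h _ (mem_procEdges.mpr ⟨i, hi, rfl⟩)

lemma exists_deg_procEdges_eq {j : ℕ} (h : j < deg (procEdges σ m) v) :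
    ∃ i : Fin (numEdges n), (i : ℕ) < m ∧ v ∈ (σ i).1 ∧ deg (procEdges σ i) v = j := by
  induction m with
  | zero => simp [procEdges, deg] at h
  | succ m ih =>
    by_cases hjm : j < deg (procEdges σ m) v
    · obtain ⟨i, hi, hv⟩ := ih hjm
      exact ⟨i, hi.trans m.lt_succ_self, hv⟩
    by_cases hm : m < numEdges n
    · have hdeg : deg (procEdges σ (m + 1)) v =
          deg (procEdges σ m) v + if v ∈ (σ ⟨m, hm⟩).1 then 1 else 0 :=
        deg_procEdges_succ σ ⟨m, hm⟩ v
      split_ifs at hdeg with hv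
      · exact ⟨⟨m, hm⟩, m.lt_succ_self, hv, show deg (procEdges σ m) v = j by omega⟩
      · omega
    · have : procEdges σ (m + 1) = procEdges σ m := by
        ext e
        simp only [mem_procEdges]
        exact exists_congr fun i => and_congr_left fun _ => by omega
      exact absurd (this ▸ h) hjm

lemma eq_of_deg_procEdges_eq {i j : Fin (numEdges n)} (hi : v ∈ (σ i).1) (hj : v ∈ (σ j).1)
    (h : deg (procEdges σ i) v = deg (procEdges σ j) v) : i = j := by
  have deg_lt {a b : Fin (numEdges n)} (ha : v ∈ (σ a).1) (hab : a < b) :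
      deg (procEdges σ a) v < deg (procEdges σ b) v := by
    have hsucc := deg_procEdges_succ σ a v
    rw [if_pos ha] at hsucc
    have := deg_mono (procEdges_mono σ (show (a : ℕ) + 1 ≤ b from hab)) v
    omega
  rcases lt_trichotomy i j with hij | hij | hij
  · exact absurd h (deg_lt hi hij).ne
  · exact hij
  · exact absurd h (deg_lt hj hij).ne'

lemma procEdges_trans_swap {a b : EdgeType n} (ha : a.1 ∉ procEdges σ m)
    (hb : b.1 ∉ procEdges σ m) :
    procEdges (σ.trans (Equiv.swap a b)) m = procEdges σ m := by
  refine procEdges_congr fun i hi => Equiv.swap_apply_of_ne_of_ne ?_ ?_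
  · rintro rfl
    exact ha (mem_procEdges.mpr ⟨i, hi, rfl⟩)
  · rintro rfl
    exact hb (mem_procEdges.mpr ⟨i, hi, rfl⟩)

lemma algB_succ (k : ℕ) (σ : Ord n) (i : Fin (numEdges n)) [Decidable
    ((∀ v ∈ (σ i).1, deg (algB k σ i) v < k) ∨ ∃ v ∈ (σ i).1, deg (procEdges σ i) v = 0)] :
    algB k σ (i + 1) =
      if (∀ v ∈ (σ i).1, deg (algB k σ i) v < k) ∨ ∃ v ∈ (σ i).1, deg (procEdges σ i) v = 0
      then insert (σ i).1 (algB k σ i) else algB k σ i := by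
  rw [algB, dif_pos i.2]
  congr

lemma algB_mono (k : ℕ) (σ : Ord n) : Monotone (algB k σ) := by
  refine monotone_nat_of_le_succ fun m => ?_
  rw [algB]
  split_ifs
  · exact subset_insert _ _
  · exact subset_rfl
  · exact subset_rfl

lemma algB_subset_procEdges (k : ℕ) (σ : Ord n) (m : ℕ) : algB k σ m ⊆ procEdges σ m := by
  induction m with
  | zero => simp [algB]
  | succ m ih =>
    have weaken := ih.trans (procEdges_mono σ m.le_succ)
    rw [algB]
    split_ifs with hm
    · exact insert_subset (mem_procEdges.mpr ⟨⟨m, hm⟩, m.lt_succ_self, rfl⟩) weaken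
    · exact weaken
    · exact weaken

lemma notMem_algB (k : ℕ) (σ : Ord n) (i : Fin (numEdges n)) : (σ i).1 ∉ algB k σ i :=
  fun h => notMem_procEdges σ i (algB_subset_procEdges k σ i h)

lemma algB_congr (k : ℕ) (h : Set.EqOn σ τ {i | (i : ℕ) < m}) : algB k σ m = algB k τ m := by
  induction m with
  | zero => rfl
  | succ m ih =>
    have h_before : Set.EqOn σ τ {i | (i : ℕ) < m} := h.mono fun i hi => Nat.lt_succ_of_lt hi
    by_cases hm : m < numEdges n
    · have h_last : σ ⟨m, hm⟩ = τ ⟨m, hm⟩ := h m.lt_succ_self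
      simp only [algB, hm, dif_pos, h_last, ih h_before, procEdges_congr h_before]
    · simp only [algB, hm, dif_neg, not_false_eq_true, ih h_before]

/-- The degree sum of `S` with each degree capped at `k`: the potential that measures the progress
of Builder, which never exceeds `k * n`. -/
def truncDegSum (k : ℕ) (S : Finset (Sym2 (Fin n))) : ℕ := ∑ v, min (deg S v) k

lemma truncDegSum_mono (k : ℕ) (h : S ⊆ T) : truncDegSum k S ≤ truncDegSum k T :=
  sum_le_sum fun v _ => min_le_min_right _ (deg_mono h v)

lemma truncDegSum_le (k : ℕ) (S : Finset (Sym2 (Fin n))) : truncDegSum k S ≤ k * n := by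
  calc truncDegSum k S ≤ ∑ _v : Fin n, k := sum_le_sum fun v _ => min_le_right _ _
    _ = k * n := by simp [mul_comm]

lemma truncDegSum_insert (k : ℕ) (he : e ∉ S) :
    truncDegSum k (insert e S) = truncDegSum k S + #{v | v ∈ e ∧ deg S v < k} := by
  rw [truncDegSum, truncDegSum, card_filter, ← sum_add_distrib]
  refine sum_congr rfl fun v _ => ?_
  rw [deg_insert he, ite_and]
  split_ifs <;> omega

lemma truncDegSum_insert_of_forall_deg_lt (he : e ∉ S) (hdiag : ¬ e.IsDiag)
    (h : ∀ v ∈ e, deg S v < k) : truncDegSum k (insert e S) = truncDegSum k S + 2 := by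
  have endpoints : ({v | v ∈ e ∧ deg S v < k} : Finset (Fin n)) = e.toFinset := by
    ext v
    simpa using h v
  rw [truncDegSum_insert k he, endpoints, Sym2.card_toFinset_of_not_isDiag e hdiag]

lemma truncDegSum_insert_of_deg_lt (he : e ∉ S) (hv : v ∈ e) (h : deg S v < k) :
    truncDegSum k S + 1 ≤ truncDegSum k (insert e S) := by
  rw [truncDegSum_insert k he]
  gcongr
  exact card_pos.mpr ⟨v, by simp [hv, h]⟩

end Degrees

/-! ### Excess edges -/

section Excess

variable {n : ℕ} {σ τ : Ord n} {k m : ℕ} {u v w : Fin n} {i j : Fin (numEdges n)}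

/-- The edge at position `i` joins `u` to `w` and is the first edge of the process at `u`. -/
def IsFirstEdge (σ : Ord n) (u w : Fin n) (i : Fin (numEdges n)) : Prop :=
  (σ i).1 = s(u, w) ∧ deg (procEdges σ i) u = 0

lemma IsFirstEdge.position_unique (hi : IsFirstEdge σ u v i) (hj : IsFirstEdge σ u w j) : i = j :=
  eq_of_deg_procEdges_eq (by simp [hi.1]) (by simp [hj.1]) (hi.2.trans hj.2.symm)

lemma IsFirstEdge.endpoint_unique (hi : IsFirstEdge σ u v i) (hj : IsFirstEdge σ u w j) :
    v = w := by
  obtain rfl := hi.position_unique hj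
  exact Sym2.congr_right.mp (hi.1.symm.trans hj.1)

/-- An excess edge joins an isolated vertex of the process to a vertex of degree at least `k`:
the only edges bought by Builder that need not join two vertices of degree less than `k`. -/
def IsExcess (k : ℕ) (σ : Ord n) (i : Fin (numEdges n)) : Prop :=
  ∃ u v, IsFirstEdge σ u v i ∧ k ≤ deg (procEdges σ i) v

open scoped Classical in
/-- The positions of the excess edges among the first `m` edges. -/
noncomputable def excessSet (k : ℕ) (σ : Ord n) (m : ℕ) : Finset (Fin (numEdges n)) :=
  {i | (i : ℕ) < m ∧ IsExcess k σ i}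

lemma mem_excessSet : i ∈ excessSet k σ m ↔ (i : ℕ) < m ∧ IsExcess k σ i := by
  simp [excessSet]

lemma excessSet_congr (k : ℕ) (h : Set.EqOn σ τ {i | (i : ℕ) < m}) :
    excessSet k σ m = excessSet k τ m := by
  ext i
  simp only [mem_excessSet]
  refine and_congr_right fun hi => ?_
  rw [IsExcess, IsExcess]
  simp only [IsFirstEdge, h hi, procEdges_congr (h.mono fun _ hj => lt_trans hj hi)]

lemma card_excessSet_mono (k : ℕ) (σ : Ord n) : Monotone fun m => #(excessSet k σ m) :=
  fun _ _ hab => card_le_card fun _ hi =>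
    have ⟨him, hexc⟩ := mem_excessSet.mp hi
    mem_excessSet.mpr ⟨him.trans_le hab, hexc⟩

lemma card_excessSet_succ (h : IsExcess k σ i) :
    #(excessSet k σ (i + 1)) = #(excessSet k σ i) + 1 := by
  rw [← card_insert_of_notMem (a := i) (by simp [mem_excessSet])]
  congr 1
  ext j
  simp only [mem_excessSet, mem_insert, Nat.lt_succ_iff_lt_or_eq, Fin.val_inj]
  grind

lemma IsExcess.exists_deg_algB_lt (hk : 1 ≤ k) (h : IsExcess k σ i) :
    ∃ u ∈ (σ i).1, deg (algB k σ i) u < k := by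
  obtain ⟨u, v, ⟨he, hu⟩, -⟩ := h
  exact ⟨u, by simp [he], by linarith [deg_mono (algB_subset_procEdges k σ i) u]⟩

lemma deg_algB_lt_of_not_isExcess (hk : 1 ≤ k) (h : ¬ IsExcess k σ i) (hw : w ∈ (σ i).1)
    (hw0 : deg (procEdges σ i) w = 0) (hv : v ∈ (σ i).1) : deg (algB k σ i) v < k := by
  refine (deg_mono (algB_subset_procEdges k σ i) v).trans_lt ?_
  rcases eq_or_ne w v with rfl | hne
  · omega
  · by_contra! hkv
    exact h ⟨w, v, ⟨(Sym2.mem_and_mem_iff hne).mp ⟨hw, hv⟩, hw0⟩, hkv⟩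

lemma two_mul_card_algB_le_truncDegSum_add (hk : 1 ≤ k) (σ : Ord n) (m : ℕ) :
    2 * #(algB k σ m) ≤ truncDegSum k (algB k σ m) + #(excessSet k σ m) := by
  classical
  induction m with
  | zero => simp [algB]
  | succ m ih =>
    have excess_mono : #(excessSet k σ m) ≤ #(excessSet k σ (m + 1)) :=
      card_excessSet_mono k σ m.le_succ
    by_cases hm : m < numEdges n
    swap
    · rw [algB, dif_neg hm]
      omega
    obtain ⟨i, rfl⟩ : ∃ i : Fin (numEdges n), (i : ℕ) = m := ⟨⟨m, hm⟩, rfl⟩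
    rw [algB_succ]
    split_ifs with hbuy
    swap
    · omega
    have hnew := notMem_algB k σ i
    rw [card_insert_of_notMem hnew]
    by_cases hexc : IsExcess k σ i
    · obtain ⟨u, hu, hlt⟩ := hexc.exists_deg_algB_lt hk
      have := truncDegSum_insert_of_deg_lt hnew hu hlt
      have := card_excessSet_succ hexc
      omega
    · have hlow : ∀ v ∈ (σ i).1, deg (algB k σ i) v < k := by
        rcases hbuy with hlow | ⟨w, hw, hw0⟩
        · exact hlow
        · exact fun v => deg_algB_lt_of_not_isExcess hk hexc hw hw0
      have := truncDegSum_insert_of_forall_deg_lt hnew (σ i).2 hlow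
      omega

lemma two_mul_card_algB_le (hk : 1 ≤ k) (σ : Ord n) (m : ℕ) :
    2 * #(algB k σ m) ≤ k * n + #(excessSet k σ m) :=
  (two_mul_card_algB_le_truncDegSum_add hk σ m).trans (by gcongr; exact truncDegSum_le k _)

lemma deg_procEdges_le_swapPos (σ : Ord n) (a b : Fin (numEdges n)) (m : ℕ) (v : Fin n) :
    deg (procEdges σ m) v ≤ deg (procEdges (swapPos a b σ) m) v +
      (if v ∈ (σ a).1 then 1 else 0) + if v ∈ (σ b).1 then 1 else 0 := by
  have subset_insert_insert :
      procEdges σ m ⊆ insert (σ b).1 (insert (σ a).1 (procEdges (swapPos a b σ) m)) := by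
    intro e he
    obtain ⟨i, hi, rfl⟩ := mem_procEdges.mp he
    simp only [mem_insert]
    by_cases ha : i = a
    · simp [ha]
    by_cases hb : i = b
    · simp [hb]
    exact Or.inr (Or.inr (mem_procEdges.mpr ⟨i, hi, by rw [swapPos_apply_of_ne_of_ne σ ha hb]⟩))
  refine (deg_mono subset_insert_insert v).trans ((deg_insert_le _ _ v).trans ?_)
  gcongr
  exact deg_insert_le _ _ v

/- Exchanging two entries changes the degree of each of their at most four endpoints by at most two,
so it affects only positions where such an endpoint has degree `0`, `k` or `k + 1`. -/
lemma IsExcess.swapPos {a b : Fin (numEdges n)} (h : IsExcess k σ i) (ha : i ≠ a) (hb : i ≠ b)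
    (hdeg : ∀ w, w ∈ (σ a).1 ∨ w ∈ (σ b).1 → w ∈ (σ i).1 →
      deg (procEdges σ i) w ∉ ({0, k, k + 1} : Finset ℕ)) :
    IsExcess k (swapPos a b σ) i := by
  obtain ⟨u, v, ⟨he, hu⟩, hv⟩ := h
  refine ⟨u, v, ⟨by rw [swapPos_apply_of_ne_of_ne σ ha hb, he], ?_⟩, ?_⟩
  · have hu_out : ¬ (u ∈ (σ a).1 ∨ u ∈ (σ b).1) := fun hmem =>
      hdeg u hmem (by simp [he]) (by simp [hu])
    have hle := deg_procEdges_le_swapPos (RGP.swapPos a b σ) a b i u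
    rw [swapPos_swapPos, swapPos_apply_left, swapPos_apply_right] at hle
    simp_all
  · have hle := deg_procEdges_le_swapPos σ a b i v
    by_cases hmem : v ∈ (σ a).1 ∨ v ∈ (σ b).1
    · have := hdeg v hmem (by simp [he])
      simp only [mem_insert, mem_singleton] at this
      split_ifs at hle <;> omega
    · simp only [not_or] at hmem
      simp only [hmem, if_false] at hle
      omega

lemma card_filter_deg_procEdges_mem_le (σ : Ord n) (W : Finset (Fin n)) (D : Finset ℕ) :
    #{i | ∃ w ∈ W, w ∈ (σ i).1 ∧ deg (procEdges σ i) w ∈ D} ≤ #W * #D := by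
  rw [← card_product]
  refine card_le_card_of_forall_subsingleton
    (fun i p => p.1 ∈ (σ i).1 ∧ deg (procEdges σ i) p.1 = p.2) (fun i hi => ?_) ?_
  · obtain ⟨w, hw, hwi, hD⟩ := (mem_filter.mp hi).2
    exact ⟨(w, _), mem_product.mpr ⟨hw, hD⟩, hwi, rfl⟩
  · rintro ⟨w, c⟩ - i ⟨-, hi, hic⟩ j ⟨-, hj, hjc⟩
    exact eq_of_deg_procEdges_eq hi hj (hic.trans hjc.symm)

lemma card_excessSet_le_swapPos (k : ℕ) (σ : Ord n) (m : ℕ) (a b : Fin (numEdges n)) :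
    #(excessSet k σ m) ≤ #(excessSet k (swapPos a b σ) m) + 14 := by
  classical
  set W := (σ a).1.toFinset ∪ (σ b).1.toFinset
  set D : Finset ℕ := {0, k, k + 1}
  set affected : Finset (Fin (numEdges n)) :=
    {i | ∃ w ∈ W, w ∈ (σ i).1 ∧ deg (procEdges σ i) w ∈ D}
  have hcover : excessSet k σ m ⊆ excessSet k (swapPos a b σ) m ∪ ({a, b} ∪ affected) := by
    intro i hi
    obtain ⟨him, hexc⟩ := mem_excessSet.mp hi
    by_contra hout
    simp only [mem_union, mem_insert, mem_singleton, not_or] at hout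
    obtain ⟨hnot, ⟨ha, hb⟩, h_unaffected⟩ := hout
    refine hnot (mem_excessSet.mpr ⟨him, hexc.swapPos ha hb fun w hw hwi hD => ?_⟩)
    exact h_unaffected (mem_filter.mpr ⟨mem_univ i, w, by simpa [W] using hw, hwi, hD⟩)
  have hW : #W ≤ 4 := (card_union_le _ _).trans (by
    rw [Sym2.card_toFinset_of_not_isDiag _ (σ a).2, Sym2.card_toFinset_of_not_isDiag _ (σ b).2])
  have h_affected : #affected ≤ 12 :=
    (card_filter_deg_procEdges_mem_le σ W D).trans (Nat.mul_le_mul hW card_le_three)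
  calc #(excessSet k σ m)
      ≤ #(excessSet k (swapPos a b σ) m) + (#{a, b} + #affected) :=
        (card_le_card hcover).trans
          ((card_union_le _ _).trans (by gcongr; exact card_union_le _ _))
    _ ≤ #(excessSet k (swapPos a b σ) m) + (2 + 12) := by
        gcongr
        exact card_le_two

lemma abs_card_excessSet_swapPos_sub_le (k m : ℕ) (a b : Fin (numEdges n)) (σ : Ord n) :
    |(#(excessSet k (swapPos a b σ) m) : ℝ) - #(excessSet k σ m)| ≤ 14 := by
  have hle := card_excessSet_le_swapPos k σ m a b
  have hge := card_excessSet_le_swapPos k (swapPos a b σ) m a b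
  rw [swapPos_swapPos] at hge
  rw [abs_sub_le_iff]
  constructor <;> rw [sub_le_iff_le_add'] <;> exact_mod_cast ‹_›

lemma variance_card_excessSet_le (n k m : ℕ) :
    𝔼 σ : Ord n, ((#(excessSet k σ m) : ℝ) - 𝔼 τ : Ord n, (#(excessSet k τ m) : ℝ)) ^ 2 ≤
      m * 14 ^ 2 := by
  have hcard : (#{i : Fin (numEdges n) | (i : ℕ) < m} : ℝ) ≤ m := by
    rw [Fin.card_filter_val_lt]
    exact_mod_cast min_le_right _ _
  refine (expect_sub_expect_sq_le (s := {i : Fin (numEdges n) | (i : ℕ) < m})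
    (fun σ τ h => ?_) (abs_card_excessSet_swapPos_sub_le k m)).trans (by gcongr)
  rw [excessSet_congr k (h.mono fun i hi => by simpa using hi)]

end Excess

/-! ### The expected number of excess edges -/

section ExpectedExcess

variable {n : ℕ} {σ : Ord n} {k m : ℕ} {u v w : Fin n}

lemma Pr_exists_apply_eq_le {e e' : EdgeType n} {P : Finset (Sym2 (Fin n)) → Prop}
    (hP : ∀ S, P S → e'.1 ∉ S) :
    Pr (fun σ : Ord n => ∃ i, (σ i).1 = e.1 ∧ P (procEdges σ i)) ≤
      Pr fun σ : Ord n => ∃ i, (σ i).1 = e'.1 ∧ P (procEdges σ i) := by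
  refine Pr_le_of_trans_swap e e' fun σ ⟨i, he, hPi⟩ => ⟨i, ?_, ?_⟩
  · rw [Equiv.trans_apply, Subtype.ext he, Equiv.swap_apply_left]
  · rwa [procEdges_trans_swap (he ▸ notMem_procEdges σ i) (hP _ hPi)]

/-- At some time of the process the vertex `v` has degree at least `j` while `u` is isolated. -/
def Reaches (u v : Fin n) (j : ℕ) (σ : Ord n) : Prop :=
  ∃ m, deg (procEdges σ m) u = 0 ∧ j ≤ deg (procEdges σ m) v

lemma Reaches.exists_apply_eq {j : ℕ} (h : Reaches u v (j + 1) σ) :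
    ∃ w ∈ ({w | w ≠ u ∧ w ≠ v} : Finset (Fin n)), ∃ i, (σ i).1 = s(v, w) ∧
      deg (procEdges σ i) u = 0 ∧ deg (procEdges σ i) v = j := by
  obtain ⟨m, hu, hv⟩ := h
  obtain ⟨i, him, hvi, hj⟩ := exists_deg_procEdges_eq hv
  obtain ⟨w, hw⟩ := hvi
  have hwu : w ≠ u := by
    rintro rfl
    exact notMem_of_deg_procEdges_eq_zero hu him (hw ▸ Sym2.mem_mk_right v w)
  have hwv : w ≠ v := by
    rintro rfl
    exact (σ i).2 (hw ▸ rfl)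
  have hui : deg (procEdges σ i) u = 0 :=
    Nat.eq_zero_of_le_zero (hu ▸ deg_mono (procEdges_mono σ him.le) u)
  exact ⟨w, by simp [hwu, hwv], i, hw, hui, hj⟩

lemma IsFirstEdge.not_reaches {i : Fin (numEdges n)} (h : IsFirstEdge σ u w i) :
    ¬ Reaches u v (deg (procEdges σ i) v + 1) σ := by
  rintro ⟨m, hu, hv⟩
  rcases le_or_gt m i with hmi | him
  · exact absurd hv (deg_mono (procEdges_mono σ hmi) v).not_gt
  · exact notMem_of_deg_procEdges_eq_zero hu him (h.1 ▸ Sym2.mem_mk_left u w)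

/- As long as `u` is isolated, the next edge at `u` or `v` to a third vertex `w` is as likely to be
`uw` as it is to be `vw`. -/
lemma Pr_reaches_succ_le (u v : Fin n) (j : ℕ) :
    Pr (Reaches u v (j + 1)) ≤ Pr (Reaches u v j) / 2 := by
  set first : Fin n → Ord n → Prop := fun w σ =>
    ∃ i, (σ i).1 = s(u, w) ∧ deg (procEdges σ i) u = 0 ∧ deg (procEdges σ i) v = j
  have exchange_le : Pr (Reaches u v (j + 1)) ≤ ∑ w with w ≠ u ∧ w ≠ v, Pr (first w) := by
    refine (Pr_le_sum fun σ => Reaches.exists_apply_eq).trans (sum_le_sum fun w hw => ?_)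
    obtain ⟨hwu, hwv⟩ := (mem_filter.mp hw).2
    refine Pr_exists_apply_eq_le (P := fun S => deg S u = 0 ∧ deg S v = j)
      (e := ⟨s(v, w), by simpa using hwv.symm⟩) (e' := ⟨s(u, w), by simpa using hwu.symm⟩) ?_
    exact fun S hS he => deg_eq_zero.mp hS.1 _ he (Sym2.mem_mk_left u w)
  have first_le : ∑ w with w ≠ u ∧ w ≠ v, Pr (first w) ≤
      Pr (Reaches u v j) - Pr (Reaches u v (j + 1)) := by
    rw [← Pr_and_not fun σ ⟨m, hu, hv⟩ => ⟨m, hu, j.le_succ.trans hv⟩]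
    refine sum_Pr_le (fun w _ σ ⟨i, he, hu, hv⟩ => ⟨⟨i, hu, hv.ge⟩, ?_⟩)
      fun w w' σ ⟨i, he, hu, _⟩ ⟨i', he', hu', _⟩ =>
        IsFirstEdge.endpoint_unique ⟨he, hu⟩ ⟨he', hu'⟩
    exact hv ▸ IsFirstEdge.not_reaches ⟨he, hu⟩
  linarith

lemma Pr_reaches_le (u v : Fin n) (j : ℕ) : Pr (Reaches u v j) ≤ (1 / 2) ^ j := by
  induction j with
  | zero => simpa using Pr_le_one (Reaches u v 0)
  | succ j ih =>
    rw [pow_succ]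
    linarith [Pr_reaches_succ_le u v j]

lemma card_mul_Pr_firstEdge_le (huv : u ≠ v) (k : ℕ) :
    #(univ.erase u) * Pr (fun σ => ∃ i, IsFirstEdge σ u v i ∧ k ≤ deg (procEdges σ i) v) ≤
      (1 / 2) ^ k := by
  set first : Fin n → Ord n → Prop := fun w σ =>
    ∃ i, IsFirstEdge σ u w i ∧ k ≤ deg (procEdges σ i) v
  have exchange_le (w : Fin n) (hw : w ∈ univ.erase u) : Pr (first v) ≤ Pr (first w) := by
    simp only [first, IsFirstEdge, and_assoc]
    refine Pr_exists_apply_eq_le (P := fun S => deg S u = 0 ∧ k ≤ deg S v)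
      (e := ⟨s(u, v), by simpa using huv⟩)
      (e' := ⟨s(u, w), by simpa using (ne_of_mem_erase hw).symm⟩) ?_
    exact fun S hS he => deg_eq_zero.mp hS.1 _ he (Sym2.mem_mk_left u w)
  calc #(univ.erase u) * Pr (first v)
      ≤ ∑ w ∈ univ.erase u, Pr (first w) := by
        simpa using card_nsmul_le_sum _ _ _ exchange_le
    _ ≤ Pr (Reaches u v k) :=
        sum_Pr_le (fun w _ σ ⟨i, hi, hv⟩ => ⟨i, hi.2, hv⟩)
          fun w w' σ ⟨i, hi, _⟩ ⟨i', hi', _⟩ => hi.endpoint_unique hi'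
    _ ≤ (1 / 2) ^ k := Pr_reaches_le u v k

open scoped Classical in
lemma card_excessSet_le (k : ℕ) (σ : Ord n) (m : ℕ) :
    #(excessSet k σ m) ≤ ∑ u, ∑ v ∈ univ.erase u,
      if ∃ i, IsFirstEdge σ u v i ∧ k ≤ deg (procEdges σ i) v then 1 else 0 := by
  simp only [sum_boole, Nat.cast_id]
  rw [← card_sigma]
  refine card_le_card_of_forall_subsingleton (fun i p => IsFirstEdge σ p.1 p.2 i)
    (fun i hi => ?_) ?_
  · obtain ⟨u, v, h, hv⟩ := (mem_excessSet.mp hi).2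
    have hne : v ≠ u := by
      rintro rfl
      exact (σ i).2 (h.1 ▸ rfl)
    exact ⟨⟨u, v⟩, by simpa [hne] using ⟨i, h, hv⟩, h⟩
  · exact fun p _ i hi j hj => hi.2.position_unique hj.2

lemma expect_card_excessSet_le (n k m : ℕ) :
    𝔼 σ : Ord n, (#(excessSet k σ m) : ℝ) ≤ (1 / 2) ^ k * n := by
  classical
  have sum_Pr_first_le (u : Fin n) :
      ∑ v ∈ univ.erase u, Pr (fun σ => ∃ i, IsFirstEdge σ u v i ∧ k ≤ deg (procEdges σ i) v) ≤
        (1 / 2) ^ k := by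
    rcases (univ.erase u).eq_empty_or_nonempty with hempty | hne
    · simp [hempty]
    have hpos : (0 : ℝ) < #(univ.erase u) := by exact_mod_cast hne.card_pos
    calc _ ≤ #(univ.erase u) • ((1 / 2 : ℝ) ^ k / #(univ.erase u)) :=
          sum_le_card_nsmul _ _ _ fun v hv => by
            rw [le_div_iff₀' hpos]
            exact card_mul_Pr_firstEdge_le (ne_of_mem_erase hv).symm k
      _ = (1 / 2) ^ k := by rw [nsmul_eq_mul, mul_div_cancel₀ _ hpos.ne']
  calc 𝔼 σ : Ord n, (#(excessSet k σ m) : ℝ)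
      ≤ 𝔼 σ : Ord n, ∑ u, ∑ v ∈ univ.erase u,
          if ∃ i, IsFirstEdge σ u v i ∧ k ≤ deg (procEdges σ i) v then 1 else 0 :=
        expect_le_expect fun σ _ => by exact_mod_cast card_excessSet_le k σ m
    _ = ∑ u, ∑ v ∈ univ.erase u,
          Pr (fun σ => ∃ i, IsFirstEdge σ u v i ∧ k ≤ deg (procEdges σ i) v) := by
        simp only [expect_sum_comm, Pr_eq_expect]
        congr!
    _ ≤ ∑ _u : Fin n, (1 / 2) ^ k := sum_le_sum fun u _ => sum_Pr_first_le u
    _ = (1 / 2) ^ k * n := by simp [mul_comm]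

lemma Pr_card_excessSet_gt_le {δ : ℝ} (hδ : 0 < δ) (n k m : ℕ) :
    (δ * n) ^ 2 * Pr (fun σ : Ord n => ((1 / 2) ^ k + δ) * n < #(excessSet k σ m)) ≤
      m * 14 ^ 2 := by
  refine (mul_Pr_le_expect (fun σ => sq_nonneg _) fun σ h => ?_).trans
    (variance_card_excessSet_le n k m)
  gcongr
  linarith [expect_card_excessSet_le n k m]

lemma tendsto_Pr_card_excessSet_gt (k : ℕ) {δ C : ℝ} (hδ : 0 < δ) (hC : 0 ≤ C) :
    Tendsto (fun n : ℕ => Pr fun σ : Ord n =>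
      ((1 / 2) ^ k + δ) * n < #(excessSet k σ ⌊C * n⌋₊)) atTop (nhds 0) := by
  have bound_tendsto : Tendsto (fun n : ℕ => C * 14 ^ 2 / δ ^ 2 / (n : ℝ)) atTop (nhds 0) :=
    tendsto_const_div_atTop_nhds_zero_nat _
  refine squeeze_zero' (.of_forall fun n => Pr_nonneg _) ?_ bound_tendsto
  filter_upwards [eventually_gt_atTop 0] with n hn
  have hn : (0 : ℝ) < n := by exact_mod_cast hn
  have chebyshev := Pr_card_excessSet_gt_le hδ n k ⌊C * n⌋₊
  have floor_le : (⌊C * n⌋₊ : ℝ) ≤ C * n := Nat.floor_le (by positivity)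
  rw [div_div, le_div_iff₀ (by positivity)]
  refine le_of_mul_le_mul_right ?_ hn
  linarith

end ExpectedExcess

/-! ### Vertices of low degree in Builder's graph -/

section LowVertices

variable {n : ℕ} {k : ℕ} {x p : ℝ} {S T : Finset (Sym2 (Fin n))} {e : Sym2 (Fin n)}

/-- The vertices of degree less than `k`. -/
def lowVertices (k : ℕ) (S : Finset (Sym2 (Fin n))) : Finset (Fin n) := {v | deg S v < k}

lemma lowVertices_anti (k : ℕ) (h : S ⊆ T) : lowVertices k T ⊆ lowVertices k S :=
  monotone_filter_right _ fun v _ => (deg_mono h v).trans_lt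

/-- The exponential potential `2 ^ (-truncDegSum k S)`, stopped (set to `0`) once at most `x`
vertices of degree less than `k` remain. -/
noncomputable def lowWeight (k : ℕ) (x : ℝ) (S : Finset (Sym2 (Fin n))) : ℝ :=
  if x < #(lowVertices k S) then (1 / 2) ^ truncDegSum k S else 0

lemma lowWeight_nonneg (k : ℕ) (x : ℝ) (S : Finset (Sym2 (Fin n))) : 0 ≤ lowWeight k x S := by
  unfold lowWeight
  positivity

lemma lowWeight_le_one (k : ℕ) (x : ℝ) (S : Finset (Sym2 (Fin n))) : lowWeight k x S ≤ 1 := by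
  unfold lowWeight
  split_ifs
  · exact pow_le_one₀ (by norm_num) (by norm_num)
  · exact zero_le_one

lemma lowWeight_le_pow_mul {d : ℕ} (h : S ⊆ T) (hd : truncDegSum k S + d ≤ truncDegSum k T) :
    lowWeight k x T ≤ (1 / 2) ^ d * lowWeight k x S := by
  have low_card_le : (#(lowVertices k T) : ℝ) ≤ #(lowVertices k S) := by
    exact_mod_cast card_le_card (lowVertices_anti k h)
  by_cases hT : x < #(lowVertices k T)
  · rw [lowWeight, lowWeight, if_pos hT, if_pos (hT.trans_le low_card_le), ← pow_add, add_comm d]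
    exact pow_le_pow_of_le_one (by norm_num) (by norm_num) hd
  · rw [lowWeight, if_neg hT]
    exact mul_nonneg (by positivity) (lowWeight_nonneg k x S)

lemma lowWeight_algB_succ_le (k : ℕ) (x : ℝ) (σ : Ord n) (i : Fin (numEdges n)) :
    lowWeight k x (algB k σ (i + 1)) ≤
      (1 - if ∀ v ∈ (σ i).1, v ∈ lowVertices k (algB k σ i) then 3 / 4 else 0) *
        lowWeight k x (algB k σ i) := by
  classical
  split_ifs with hlow
  · have hdeg : ∀ v ∈ (σ i).1, deg (algB k σ i) v < k := by simpa [lowVertices] using hlow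
    have hsum := truncDegSum_insert_of_forall_deg_lt (notMem_algB k σ i) (σ i).2 hdeg
    rw [algB_succ, if_pos (Or.inl hdeg)]
    convert lowWeight_le_pow_mul (subset_insert _ _) hsum.ge using 2
    norm_num
  · simpa using lowWeight_le_pow_mul (d := 0) (algB_mono k σ (Nat.le_succ i))
      (truncDegSum_mono k (algB_mono k σ (Nat.le_succ i)))

lemma card_choose_two_le (σ : Ord n) (i : Fin (numEdges n)) (U : Finset (Fin n)) :
    (#U).choose 2 ≤ #{j ∈ Ici i | ∀ v ∈ (σ j).1, v ∈ U} + i := by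
  have edges_inside : U.offDiag.image Sym2.mk.uncurry ⊆
      ({j ∈ Ici i | ∀ v ∈ (σ j).1, v ∈ U} ∪ Iio i).image fun j => (σ j).1 := by
    intro e he
    obtain ⟨⟨a, b⟩, hab, rfl⟩ := mem_image.mp he
    obtain ⟨ha, hb, hne⟩ := mem_offDiag.mp hab
    obtain ⟨j, hj⟩ := σ.surjective ⟨s(a, b), by simpa using hne⟩
    refine mem_image.mpr ⟨j, ?_, by rw [hj]; rfl⟩
    have hinside : ∀ v ∈ (σ j).1, v ∈ U := by simp [hj, ha, hb]
    grind
  calc (#U).choose 2 = #(U.offDiag.image Sym2.mk.uncurry) := (Sym2.card_image_offDiag U).symm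
    _ ≤ #{j ∈ Ici i | ∀ v ∈ (σ j).1, v ∈ U} + #(Iio i) :=
        (card_le_card edges_inside).trans (card_image_le.trans (card_union_le _ _))
    _ = #{j ∈ Ici i | ∀ v ∈ (σ j).1, v ∈ U} + i := by rw [Fin.card_Iio]

lemma mul_card_Ici_le_card_filter (hp0 : 0 ≤ p) (σ : Ord n) {i : Fin (numEdges n)}
    {U : Finset (Fin n)} (hU : p * numEdges n + i ≤ (#U).choose 2) :
    p * #(Ici i) ≤ #{j ∈ Ici i | ∀ v ∈ (σ j).1, v ∈ U} := by
  have hcount : ((#U).choose 2 : ℝ) ≤ #{j ∈ Ici i | ∀ v ∈ (σ j).1, v ∈ U} + (i : ℕ) := by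
    exact_mod_cast card_choose_two_le σ i U
  have hIci : p * #(Ici i) ≤ p * numEdges n := by
    gcongr
    exact (card_le_univ _).trans (Fintype.card_fin _).le
  linarith

/- Given the first `i` edges, the next one is uniform among the remaining ones, and it lies inside
the set of low vertices with probability at least `p`. -/
lemma expect_lowWeight_algB_succ_le {i : Fin (numEdges n)} (hp0 : 0 ≤ p)
    (hp : ∀ U : Finset (Fin n), x < #U → p * numEdges n + i ≤ (#U).choose 2) :
    𝔼 σ : Ord n, lowWeight k x (algB k σ (i + 1)) ≤
      Real.exp (-(3 / 4 * p)) * 𝔼 σ : Ord n, lowWeight k x (algB k σ i) := by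
  have hIci : (Ici i).Nonempty := ⟨i, mem_Ici.mpr le_rfl⟩
  have hIci_pos : (0 : ℝ) < #(Ici i) := by exact_mod_cast hIci.card_pos
  rw [← expect_expect_swapPos (fun σ => lowWeight k x (algB k σ (i + 1))) i hIci, mul_expect]
  refine expect_le_expect fun σ _ => ?_
  set L := lowVertices k (algB k σ i)
  have weight_swapPos_le (j : Fin (numEdges n)) (hj : j ∈ Ici i) :
      lowWeight k x (algB k (swapPos i j σ) (i + 1)) ≤
        (1 - if ∀ v ∈ (σ j).1, v ∈ L then 3 / 4 else 0) * lowWeight k x (algB k σ i) := by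
    have h_before : algB k (swapPos i j σ) i = algB k σ i :=
      algB_congr k (swapPos_eqOn σ (by simp) (by simpa using hj))
    simpa only [h_before, swapPos_apply_left] using lowWeight_algB_succ_le k x (swapPos i j σ) i
  have expect_drop : 𝔼 j ∈ Ici i, (1 - if ∀ v ∈ (σ j).1, v ∈ L then (3 / 4 : ℝ) else 0) =
      1 - 3 / 4 * (#{j ∈ Ici i | ∀ v ∈ (σ j).1, v ∈ L} / #(Ici i)) := by
    rw [expect_sub_distrib, expect_const hIci, expect_eq_sum_div_card, ← sum_filter, sum_const,
      nsmul_eq_mul]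
    ring
  refine (expect_le_expect weight_swapPos_le).trans ?_
  rw [← expect_mul, expect_drop]
  by_cases hx : x < #L
  · gcongr
    · exact lowWeight_nonneg k x _
    · have := (le_div_iff₀ hIci_pos).mpr (mul_card_Ici_le_card_filter hp0 σ (hp L hx))
      linarith [Real.one_sub_le_exp_neg (3 / 4 * p)]
  · simp [lowWeight, L, hx]

lemma expect_lowWeight_algB_le {M : ℕ} (hM : M ≤ numEdges n) (hp0 : 0 ≤ p)
    (hp : ∀ U : Finset (Fin n), x < #U → p * numEdges n + M ≤ (#U).choose 2) :
    𝔼 σ : Ord n, lowWeight k x (algB k σ M) ≤ Real.exp (-(3 / 4 * p * M)) := by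
  induction M with
  | zero => simpa using expect_le univ_nonempty fun σ _ => lowWeight_le_one k x (algB k σ 0)
  | succ M ih =>
    have hp' (U : Finset (Fin n)) (hU : x < #U) : p * numEdges n + M ≤ (#U).choose 2 :=
      le_trans (by gcongr; exact M.le_succ) (hp U hU)
    calc 𝔼 σ : Ord n, lowWeight k x (algB k σ (M + 1))
        ≤ Real.exp (-(3 / 4 * p)) * 𝔼 σ : Ord n, lowWeight k x (algB k σ M) :=
          expect_lowWeight_algB_succ_le (i := ⟨M, hM⟩) hp0 hp'
      _ ≤ Real.exp (-(3 / 4 * p)) * Real.exp (-(3 / 4 * p * M)) := by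
          gcongr
          exact ih (M.le_succ.trans hM) hp'
      _ = Real.exp (-(3 / 4 * p * (M + 1 : ℕ))) := by
          rw [← Real.exp_add]
          push_cast
          ring_nf

lemma Pr_card_lowVertices_gt_le {M : ℕ} (hM : M ≤ numEdges n) (hp0 : 0 ≤ p)
    (hp : ∀ U : Finset (Fin n), x < #U → p * numEdges n + M ≤ (#U).choose 2) :
    Pr (fun σ : Ord n => x < #(lowVertices k (algB k σ M))) ≤
      Real.exp (k * n * Real.log 2 - 3 / 4 * p * M) := by
  have markov : (1 / 2 : ℝ) ^ (k * n) * Pr (fun σ : Ord n => x < #(lowVertices k (algB k σ M))) ≤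
      Real.exp (-(3 / 4 * p * M)) := by
    refine (mul_Pr_le_expect (fun σ => lowWeight_nonneg k x _) fun σ h => ?_).trans
      (expect_lowWeight_algB_le hM hp0 hp)
    rw [lowWeight, if_pos h]
    exact pow_le_pow_of_le_one (by norm_num) (by norm_num) (truncDegSum_le k _)
  have two_pow : (2 : ℝ) ^ (k * n) = Real.exp (k * n * Real.log 2) := by
    rw [← Nat.cast_mul, Real.exp_nat_mul, Real.exp_log two_pos]
  rw [one_div_pow, one_div_mul_eq_div, div_le_iff₀' (by positivity), two_pow,
    ← Real.exp_add] at markov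
  simpa only [sub_eq_add_neg] using markov

end LowVertices

section LowVerticesAsymptotics

variable {k : ℕ} {C ε : ℝ}

lemma cast_numEdges (n : ℕ) : (numEdges n : ℝ) = n * (n - 1) / 2 := by
  rw [numEdges, ← Nat.choose_two_right, Nat.cast_choose_two]

lemma eventually_natFloor_mul_le_numEdges (hC : 0 ≤ C) :
    ∀ᶠ n : ℕ in atTop, ⌊C * n⌋₊ ≤ numEdges n := by
  filter_upwards [tendsto_natCast_atTop_atTop.eventually_ge_atTop (2 * C + 1)] with n hn
  have : (⌊C * n⌋₊ : ℝ) ≤ numEdges n :=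
    calc (⌊C * n⌋₊ : ℝ) ≤ C * n := Nat.floor_le (by positivity)
      _ ≤ (n - 1) / 2 * n := by gcongr; linarith
      _ = numEdges n := by rw [cast_numEdges]; ring
  exact_mod_cast this

/- Divided by `n ^ 2`, the two sides tend to `p / 2` and, for `#U ≈ ε * n`, to `ε ^ 2 / 2`. -/
lemma eventually_mul_numEdges_add_le_choose_two {p : ℝ} (hp0 : 0 ≤ p) (hε : 0 < ε)
    (hp : p < ε ^ 2) (hC : 0 ≤ C) :
    ∀ᶠ n : ℕ in atTop, ∀ U : Finset (Fin n), ε * n < #U →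
      p * numEdges n + ⌊C * n⌋₊ ≤ (#U).choose 2 := by
  filter_upwards [tendsto_natCast_atTop_atTop.eventually_ge_atTop (1 / ε),
    tendsto_natCast_atTop_atTop.eventually_ge_atTop ((2 * C + ε) / (ε ^ 2 - p))] with n hn hn'
    U hU
  rw [div_le_iff₀' hε] at hn
  rw [div_le_iff₀ (by linarith)] at hn'
  rw [cast_numEdges, Nat.cast_choose_two]
  have hfloor : (⌊C * n⌋₊ : ℝ) ≤ C * n := Nat.floor_le (by positivity)
  have hUsq : ε * n * (ε * n - 1) ≤ (#U : ℝ) * (#U - 1) := by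
    have : 0 ≤ ε * n - 1 := by linarith
    gcongr
  have hquad : (2 * C + ε) * n ≤ n * (ε ^ 2 - p) * n := by gcongr
  have hpn : 0 ≤ p * n := by positivity
  linarith

/- With `p = 19/20 * ε ^ 2`, the exponential potential gains `3/4 * p * C ≥ 57/80 * k` per vertex,
more than its range `k * log 2`. -/
lemma tendsto_Pr_card_lowVertices_gt (hk : 1 ≤ k) (hε : 0 < ε) (hC : k ≤ C * ε ^ 2) :
    Tendsto (fun n : ℕ => Pr fun σ : Ord n =>
      ε * n < #(lowVertices k (algB k σ ⌊C * n⌋₊))) atTop (nhds 0) := by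
  have hk : (1 : ℝ) ≤ k := by exact_mod_cast hk
  have hC0 : 0 ≤ C := (pos_of_mul_pos_left (by linarith) (sq_nonneg ε)).le
  have hp0 : 0 ≤ 19 / 20 * ε ^ 2 := by positivity
  have bound_tendsto : Tendsto (fun n : ℕ => Real.exp (ε ^ 2 + -(1 / 80 * (n : ℝ)))) atTop
      (nhds 0) :=
    Real.tendsto_exp_atBot.comp <| tendsto_atBot_add_const_left _ _ <|
      tendsto_neg_atTop_atBot.comp (tendsto_natCast_atTop_atTop.const_mul_atTop (by norm_num))
  refine squeeze_zero' (.of_forall fun n => Pr_nonneg _) ?_ bound_tendsto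
  filter_upwards [eventually_natFloor_mul_le_numEdges hC0,
    eventually_mul_numEdges_add_le_choose_two hp0 hε (by nlinarith [sq_pos_of_pos hε]) hC0]
    with n hM hp
  refine (Pr_card_lowVertices_gt_le hM hp0 hp).trans (Real.exp_le_exp.mpr ?_)
  have hfloor : C * n - 1 ≤ ⌊C * n⌋₊ := (Nat.sub_one_lt_floor _).le
  have gain : k * n - ε ^ 2 ≤ ε ^ 2 * ⌊C * n⌋₊ :=
    calc k * n - ε ^ 2 ≤ C * ε ^ 2 * n - ε ^ 2 := by gcongr
      _ = ε ^ 2 * (C * n - 1) := by ring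
      _ ≤ ε ^ 2 * ⌊C * n⌋₊ := by gcongr
  have potential_range : k * n * Real.log 2 ≤ 7 / 10 * (k * n) := by
    rw [mul_comm]
    gcongr
    linarith [Real.log_two_lt_d9]
  have hkn : (n : ℝ) ≤ k * n := le_mul_of_one_le_left n.cast_nonneg hk
  linarith [sq_nonneg ε]

end LowVerticesAsymptotics

theorem algB_few_edges_general {k : ℕ} (hk : 1 ≤ k) {δ ε C : ℝ} (hδ : 0 < δ) (hε : 0 < ε)
    (hC : k * ε⁻¹ ^ 2 ≤ C) :
    Tendsto (fun n : ℕ => Pr fun σ : Ord n =>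
      (#(algB k σ ⌊C * n⌋₊) : ℝ) ≤ ((k : ℝ) / 2 + (2 : ℝ) ^ (-(k : ℤ)) + δ / 2) * n ∧
        (#{v : Fin n | deg (algB k σ ⌊C * n⌋₊) v ≤ k - 1} : ℝ) ≤ ε * n) atTop (nhds 1) := by
  have hC0 : 0 ≤ C := le_trans (by positivity) hC
  have hCε : k ≤ C * ε ^ 2 := by
    rwa [inv_pow, ← div_eq_mul_inv, div_le_iff₀ (by positivity)] at hC
  have excess_tendsto := tendsto_Pr_card_excessSet_gt k hδ hC0
  have low_tendsto := tendsto_Pr_card_lowVertices_gt hk hε hCε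
  have bound_tendsto := (excess_tendsto.const_sub 1).sub low_tendsto
  rw [sub_zero, sub_zero] at bound_tendsto
  refine tendsto_of_tendsto_of_tendsto_of_le_of_le bound_tendsto tendsto_const_nhds
    (fun n => ?_) fun n => Pr_le_one _
  rw [sub_sub, sub_le_iff_le_add, ← add_assoc]
  refine one_le_Pr_add_Pr_add_Pr fun σ => ?_
  by_contra! ⟨hgood, hexcess, hlow⟩
  have hedges : 2 * (#(algB k σ ⌊C * n⌋₊) : ℝ) ≤ k * n + #(excessSet k σ ⌊C * n⌋₊) := by
    exact_mod_cast two_mul_card_algB_le hk σ _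
  have hzpow : (2 : ℝ) ^ (-(k : ℤ)) = (1 / 2) ^ k := by simp
  have hpow_nonneg : (0 : ℝ) ≤ (1 / 2) ^ k * n := by positivity
  refine (hgood (by rw [hzpow]; linarith)).not_ge ?_
  simpa only [lowVertices, ← Nat.le_sub_one_iff_lt hk] using hlow

/-- Fix an integer `k ≥ 2` and constants `δ > 0`, `0 < ε < δ/(2k)`, and
set `C = k·ε⁻²`. With high probability, Builder's graph `B_{⌊Cn⌋}` (from Algorithm 1)
has at most `(k/2 + 2⁻ᵏ + δ/2)·n` edges and at most `εn` vertices of degree at most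
`k − 1`. -/
theorem algB_few_edges (k : ℕ) (hk : 2 ≤ k) (δ ε : ℝ) (hδ : 0 < δ)
    (hε : 0 < ε) (hεδ : ε < δ / (2 * k)) :
    Filter.Tendsto
      (fun n : ℕ => Pr (fun σ : Ord n =>
        ((algB k σ ⌊(k : ℝ) * ε⁻¹ ^ 2 * (n : ℝ)⌋₊).card : ℝ) ≤
            ((k : ℝ) / 2 + (2 : ℝ) ^ (-(k : ℤ)) + δ / 2) * n ∧
        ((((Finset.univ : Finset (Fin n)).filter
            (fun v => deg (algB k σ ⌊(k : ℝ) * ε⁻¹ ^ 2 * (n : ℝ)⌋₊) v ≤ k - 1)).card : ℝ)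
          ≤ ε * n)))
      Filter.atTop (nhds 1) :=
  algB_few_edges_general (by lia) hδ hε le_rfl

end RGP
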